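/- For every x ∈ X and every u > 0, setting u_i = u + log( (|T_i|+1) i² π² / 6 ) for i ≥ 1, one has P[ sup_{x⋆∈X} (f_{x⋆} − f_x) > sup_{x⋆∈X} Σ_{i≥1 : ε_i < d(x,x⋆)} ε_{i−1} √(2 u_i) ] < e^{−u}. -/

import Mathlib

/-!
Write `f_{x⋆} - f_x` as the telescoping sum of the links `f_{π_i} - f_{π_{i-1}}`. A link with
`d(x,x⋆) ≤ ε_i` vanishes, since then `π_i = π_{i-1} = x`. So if `f_{x⋆} - f_x` exceeds
`∑_{ε_i < d(x,x⋆)} ε_{i-1} √(2 u_i)`, some link exceeds its own term `ε_{i-1} √(2 u_i)`. A link is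
a centered Gaussian of standard deviation at most `ε_{i-1}`, so this has probability at most
`exp (-u_i)` (`measureReal_link_le`). There are at most `|T_i| + 1` links at level `i`, so the union
bound for that level is `exp (-u) * 6 / (π² i²)`.

As `X` is finite, only levels `i ≤ M` occur, for some `M` common to all `x⋆`. A finite partial sum
of `∑ 1 / i²` is strictly below `π² / 6` (`sum_inv_sq_lt`), which makes the final inequality strict.

The threshold is a series with infinitely many nonzero terms once `d(x,x⋆) > 0`. Comparing it with
its partial sums requires convergence, which holds because `|T_i| ≤ |X|` (`summable_threshold`).
-/


open MeasureTheory ProbabilityTheory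

noncomputable section

/-- `ε_i = 2^{-i+1}`. -/
def eps (i : ℕ) : ℝ := 2 ^ ((1 : ℤ) - (i : ℤ))

/-- `(f_x)_{x ∈ X}` is a centered Gaussian family: every linear combination
`Σ_x a_x f_x` is a centered Gaussian random variable (possibly degenerate). -/
def IsCenteredGaussianFamily {X Ω : Type*} [Fintype X] [MeasurableSpace Ω]
    (μ : Measure Ω) (f : X → Ω → ℝ) : Prop :=
  (∀ x, Measurable (f x)) ∧
    ∀ a : X → ℝ, ∃ v : NNReal,
      Measure.map (fun ω => ∑ x, a x * f x ω) μ = gaussianReal 0 v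

/-- The canonical pseudo-distance `d(x,x') = √(E[(f_x - f_{x'})²])` of a family of
random variables. -/
def canonDist {X Ω : Type*} [MeasurableSpace Ω] (μ : Measure Ω) (f : X → Ω → ℝ)
    (x x' : X) : ℝ :=
  Real.sqrt (∫ ω, (f x ω - f x' ω) ^ 2 ∂μ)

/-- The level `u_i = u + log ((c + 1) i² π² / 6)`, where `c` is the number of points of the net. -/
def lvl (u : ℝ) (c i : ℕ) : ℝ :=
  u + Real.log (((c : ℝ) + 1) * (i : ℝ) ^ 2 * Real.pi ^ 2 / 6)

lemma eps_pos (i : ℕ) : 0 < eps i := by unfold eps; positivity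

lemma eps_pred_le (i : ℕ) : eps i ≤ eps (i - 1) := by
  unfold eps
  exact zpow_le_zpow_right₀ (by norm_num) (by omega)

lemma eps_pred_eq (i : ℕ) (hi : 1 ≤ i) : eps (i - 1) = 4 * (1 / 2 : ℝ) ^ i := by
  obtain ⟨j, rfl⟩ := Nat.exists_eq_add_of_le' hi
  unfold eps
  rw [Nat.add_sub_cancel, zpow_sub₀ (by norm_num), zpow_natCast, pow_succ, one_div, inv_pow]
  field_simp
  norm_num

/-- Since `π² > 6`, the argument of the logarithm is at least `1`. -/
lemma lvl_nonneg {u : ℝ} (hu : 0 < u) (c : ℕ) {i : ℕ} (hi : 1 ≤ i) : 0 ≤ lvl u c i := by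
  have h1 : (1 : ℝ) ≤ i := by exact_mod_cast hi
  have hpi : (6 : ℝ) ≤ Real.pi ^ 2 := by nlinarith [Real.pi_gt_three]
  have h : (1 : ℝ) ≤ ((c : ℝ) + 1) * (i : ℝ) ^ 2 * Real.pi ^ 2 / 6 := by
    have hc : (1 : ℝ) ≤ (c : ℝ) + 1 := by simp
    have h2 : (1 : ℝ) ≤ (i : ℝ) ^ 2 := one_le_pow₀ h1
    have h3 : (1 : ℝ) ≤ ((c : ℝ) + 1) * (i : ℝ) ^ 2 := one_le_mul_of_one_le_of_one_le hc h2
    rw [le_div_iff₀ (by norm_num)]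
    nlinarith
  unfold lvl
  linarith [Real.log_nonneg h]

lemma exp_neg_lvl (u : ℝ) (c : ℕ) {i : ℕ} (hi : 1 ≤ i) :
    ((c : ℝ) + 1) * Real.exp (-lvl u c i)
      = Real.exp (-u) * (6 / Real.pi ^ 2) * (1 / (i : ℝ) ^ 2) := by
  have h1 : (0 : ℝ) < i := by exact_mod_cast hi
  have hpi := Real.pi_pos
  have hc : (0 : ℝ) < (c : ℝ) + 1 := by positivity
  unfold lvl
  rw [neg_add, Real.exp_add, Real.exp_neg (Real.log _), Real.exp_log (by positivity)]
  field_simp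

/-- The partial sums of the Basel series stay strictly below its value. -/
lemma sum_inv_sq_lt (M : ℕ) :
    ∑ i ∈ Finset.Icc 1 M, (1 / (i : ℝ) ^ 2) < Real.pi ^ 2 / 6 := by
  have h := sum_le_hasSum (Finset.Icc 1 (M + 1)) (fun i _ => by positivity) hasSum_zeta_two
  rw [Finset.sum_Icc_succ_top (by omega)] at h
  have : (0 : ℝ) < 1 / ((M + 1 : ℕ) : ℝ) ^ 2 := by positivity
  linarith

/-- `√(2 u_i)` grows at most polynomially in `i` when the nets have bounded size, while
`ε_{i-1}` decays geometrically. -/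
lemma summable_threshold {u : ℝ} (hu : 0 < u) (c : ℕ → ℕ) (N : ℕ) (hc : ∀ i, c i ≤ N)
    (P : ℕ → Prop) [DecidablePred P] :
    Summable fun i : ℕ =>
      if 1 ≤ i ∧ P i then eps (i - 1) * Real.sqrt (2 * lvl u (c i) i) else 0 := by
  have hg : Summable fun i : ℕ => (4 * (1 + 2 * u)) * (1 / 2 : ℝ) ^ i
      + (8 * (((N : ℝ) + 1) * Real.pi ^ 2 / 6)) * ((i : ℝ) ^ 2 * (1 / 2 : ℝ) ^ i) := by
    refine (summable_geometric_two.mul_left _).add (Summable.mul_left _ ?_)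
    exact summable_pow_mul_geometric_of_norm_lt_one 2 (by norm_num)
  refine Summable.of_nonneg_of_le (fun i => ?_) (fun i => ?_) hg
  · split_ifs
    · exact mul_nonneg (eps_pos _).le (Real.sqrt_nonneg _)
    · exact le_rfl
  · split_ifs with h
    · have hl : lvl u (c i) i ≤ u + ((N : ℝ) + 1) * (i : ℝ) ^ 2 * Real.pi ^ 2 / 6 := by
        unfold lvl
        have h0 : (c i : ℝ) ≤ N := by exact_mod_cast hc i
        have h1 := Real.log_le_self
          (show 0 ≤ ((c i : ℝ) + 1) * (i : ℝ) ^ 2 * Real.pi ^ 2 / 6 by positivity)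
        have h2 : ((c i : ℝ) + 1) * (i : ℝ) ^ 2 * Real.pi ^ 2 / 6
            ≤ ((N : ℝ) + 1) * (i : ℝ) ^ 2 * Real.pi ^ 2 / 6 := by gcongr
        linarith
      have h0 := lvl_nonneg hu (c i) h.1
      have hs : Real.sqrt (2 * lvl u (c i) i) ≤ 1 + 2 * lvl u (c i) i := by
        rw [Real.sqrt_le_left (by linarith)]
        nlinarith
      rw [eps_pred_eq i h.1]
      have hp : (0 : ℝ) < (1 / 2 : ℝ) ^ i := by positivity
      calc 4 * (1 / 2 : ℝ) ^ i * Real.sqrt (2 * lvl u (c i) i)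
          ≤ 4 * (1 / 2 : ℝ) ^ i
            * (1 + 2 * (u + ((N : ℝ) + 1) * (i : ℝ) ^ 2 * Real.pi ^ 2 / 6)) := by
            gcongr
            linarith
        _ = _ := by ring
    · positivity

/-- Chernoff bound for a link. The increment is sub-Gaussian with any variance proxy `e²` above its
variance, which also covers degenerate increments. -/
lemma measureReal_link_le {X Ω : Type*} [Fintype X] [MeasurableSpace Ω]
    (μ : Measure Ω) [IsProbabilityMeasure μ]
    (f : X → Ω → ℝ) (hf : IsCenteredGaussianFamily μ f) (p q : X) {e w : ℝ} (he : 0 < e)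
    (hd : canonDist μ f p q ≤ e) (hw : 0 ≤ w) :
    μ.real {ω | e * Real.sqrt (2 * w) < f p ω - f q ω} ≤ Real.exp (-w) := by
  classical
  obtain ⟨v, hv⟩ := hf.2 (Pi.single p 1 - Pi.single q 1)
  have hfun : (fun ω => ∑ x, (Pi.single p 1 - Pi.single q 1 : X → ℝ) x * f x ω)
      = fun ω => f p ω - f q ω := by
    funext ω
    simp [sub_mul, Finset.sum_sub_distrib, Pi.single_apply]
  rw [hfun] at hv
  have hm : AEMeasurable (fun ω => f p ω - f q ω) μ := ((hf.1 p).sub (hf.1 q)).aemeasurable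
  have hvar : ∫ ω, (f p ω - f q ω) ^ 2 ∂μ = v := by
    have h1 : ∫ ω, (f p ω - f q ω) ^ 2 ∂μ
        = ∫ y, y ^ 2 ∂(Measure.map (fun ω => f p ω - f q ω) μ) := by
      rw [integral_map hm (by fun_prop)]
    have h2 := variance_id_gaussianReal (μ := 0) (v := v)
    rw [variance_eq_integral (by fun_prop)] at h2
    simpa [h1, hv] using h2
  have hve : (v : ℝ) ≤ e ^ 2 := by
    unfold canonDist at hd
    rw [hvar] at hd
    exact (Real.sqrt_le_left he.le).1 hd
  have hsub : HasSubgaussianMGF (fun ω => f p ω - f q ω) (e ^ 2).toNNReal μ := by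
    refine ⟨fun t => ?_, fun t => ?_⟩
    · have := integrable_exp_mul_gaussianReal (μ := 0) (v := v) t
      rw [← hv] at this
      exact this.comp_aemeasurable hm
    · rw [mgf_gaussianReal hv]
      apply Real.exp_le_exp.2
      rw [Real.coe_toNNReal _ (sq_nonneg e), zero_mul, zero_add]
      gcongr
  calc μ.real {ω | e * Real.sqrt (2 * w) < f p ω - f q ω}
      ≤ μ.real {ω | e * Real.sqrt (2 * w) ≤ f p ω - f q ω} :=
        measureReal_mono (Set.ofPred_subset_ofPred.2 fun _ h => le_of_lt h)
    _ ≤ _ := hsub.measure_ge_le (by positivity)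
    _ = Real.exp (-w) := by
        congr 1
        rw [Real.coe_toNNReal _ (sq_nonneg e), mul_pow, Real.sq_sqrt (by positivity)]
        field_simp

/-- **The chaining bound.** -/
theorem chaining_tail_bound
    {X Ω : Type*} [Fintype X] [Nonempty X] [MeasurableSpace Ω]
    (μ : Measure Ω) [IsProbabilityMeasure μ]
    (f : X → Ω → ℝ) (hf : IsCenteredGaussianFamily μ f)
    (T : ℕ → Finset X) (hT : ∀ i, 1 ≤ i → (T i).Nonempty)
    (π : ℕ → X × X → X)
    -- (i) `π_0(x,x⋆) = x`
    (hπ0 : ∀ x xstar : X, π 0 (x, xstar) = x)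
    -- (ii) `π_i(x,x⋆)` is eventually equal to `x⋆`
    (hπlim : ∀ x xstar : X, ∃ m : ℕ, ∀ i, m ≤ i → π i (x, xstar) = xstar)
    -- (iii) consecutive links are `ε_{i-1}`-close
    (hπlink : ∀ i, 1 ≤ i → ∀ x xstar : X,
      canonDist μ f (π i (x, xstar)) (π (i - 1) (x, xstar)) ≤ eps (i - 1))
    -- (iv) `π_i(x,x⋆) = x` whenever `d(x,x⋆) ≤ ε_i`
    (hπstay : ∀ i, ∀ x xstar : X, canonDist μ f x xstar ≤ eps i → π i (x, xstar) = x)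
    -- (v) for fixed `x` and `i ≥ 1`, at most `|T_i| + 1` distinct pairs of links
    (hπcard : ∀ (x : X) (i : ℕ), 1 ≤ i →
      Set.ncard {p : X × X | ∃ xstar : X, p = (π i (x, xstar), π (i - 1) (x, xstar))} ≤
        (T i).card + 1)
    (x : X) (u : ℝ) (hu : 0 < u) :
    μ {ω | (⨆ xstar : X, (f xstar ω - f x ω)) >
          ⨆ xstar : X, ∑' i : ℕ,
            if 1 ≤ i ∧ eps i < canonDist μ f x xstar then
              eps (i - 1) *
                Real.sqrt (2 * (u + Real.log ((((T i).card : ℝ) + 1) * (i : ℝ) ^ 2 *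
                  Real.pi ^ 2 / 6)))
            else 0} <
      ENNReal.ofReal (Real.exp (-u)) := by
  classical
  set N : ℕ → Set (X × X) :=
    fun i => {p : X × X | ∃ xstar : X, p = (π i (x, xstar), π (i - 1) (x, xstar))} with hN
  have hNfin : ∀ i, (N i).Finite := fun i => Set.toFinite _
  set L : ℕ → ℝ := fun i => lvl u (T i).card i with hL
  -- `X` is finite, so all chains starting at `x` are stationary after a common step `M`.
  obtain ⟨M, hM⟩ : ∃ M : ℕ, ∀ xstar, π M (x, xstar) = xstar := by
    choose m hm using hπlim x
    exact ⟨Finset.univ.sup m, fun y => hm y _ (Finset.le_sup (Finset.mem_univ y))⟩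
  set B : ℕ → X × X → Set Ω :=
    fun i p => {ω | eps (i - 1) * Real.sqrt (2 * L i) < f p.1 ω - f p.2 ω} with hB
  have hsubset : {ω | (⨆ xstar : X, (f xstar ω - f x ω)) >
          ⨆ xstar : X, ∑' i : ℕ,
            if 1 ≤ i ∧ eps i < canonDist μ f x xstar then
              eps (i - 1) *
                Real.sqrt (2 * (u + Real.log ((((T i).card : ℝ) + 1) * (i : ℝ) ^ 2 *
                  Real.pi ^ 2 / 6)))
            else 0} ⊆ ⋃ i ∈ Finset.Icc 1 M, ⋃ p ∈ (hNfin i).toFinset, B i p := by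
    intro ω hω
    obtain ⟨y, hy⟩ := exists_eq_ciSup_of_finite (f := fun y : X => f y ω - f x ω)
    rw [Set.mem_ofPred_eq, ← hy] at hω
    have hlt := lt_of_le_of_lt (le_ciSup (Set.finite_range _).bddAbove y) hω
    have hsum := summable_threshold hu (fun i => (T i).card) (Fintype.card X)
      (fun i => Finset.card_le_univ _) (fun i => eps i < canonDist μ f x y)
    have hpart := hsum.sum_le_tsum (Finset.Icc 1 M) (fun i _ => by
      split_ifs
      · exact mul_nonneg (eps_pos _).le (Real.sqrt_nonneg _)
      · exact le_rfl)
    have hlt2 := lt_of_le_of_lt hpart hlt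
    have htel : f y ω - f x ω
        = ∑ i ∈ Finset.Icc 1 M, (f (π i (x, y)) ω - f (π (i - 1) (x, y)) ω) := by
      have h := Finset.sum_range_sub (fun i => f (π i (x, y)) ω) M
      rw [hM, hπ0] at h
      rw [← h, ← Finset.Ico_add_one_right_eq_Icc, Finset.sum_Ico_eq_sum_range]
      simp [add_comm]
    rw [htel] at hlt2
    obtain ⟨i, hi, hlti⟩ := Finset.exists_lt_of_sum_lt hlt2
    have hi1 := (Finset.mem_Icc.1 hi).1
    simp only [Set.mem_iUnion]
    refine ⟨i, hi, (π i (x, y), π (i - 1) (x, y)), (hNfin i).mem_toFinset.2 ⟨y, rfl⟩, ?_⟩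
    split_ifs at hlti with h
    · exact hlti
    · -- at scales `ε_i ≥ d(x,x⋆)` both endpoints of the link are `x`, so it cannot be positive
      have hle : canonDist μ f x y ≤ eps i := by
        by_contra hcon
        exact h ⟨hi1, not_le.1 hcon⟩
      rw [hπstay i x y hle, hπstay (i - 1) x y (hle.trans (eps_pred_le i))] at hlti
      simp at hlti
  have hlevel : ∀ i ∈ Finset.Icc 1 M, μ.real (⋃ p ∈ (hNfin i).toFinset, B i p)
      ≤ Real.exp (-u) * (6 / Real.pi ^ 2) * (1 / (i : ℝ) ^ 2) := by
    intro i hi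
    have hi1 := (Finset.mem_Icc.1 hi).1
    calc μ.real (⋃ p ∈ (hNfin i).toFinset, B i p)
        ≤ ∑ p ∈ (hNfin i).toFinset, μ.real (B i p) := measureReal_biUnion_finset_le _ _
      _ ≤ ∑ p ∈ (hNfin i).toFinset, Real.exp (-L i) := by
          refine Finset.sum_le_sum fun p hp => ?_
          obtain ⟨y, rfl⟩ : ∃ y, p = (π i (x, y), π (i - 1) (x, y)) := by simpa [hN] using hp
          exact measureReal_link_le μ f hf _ _ (eps_pos _) (hπlink i hi1 x y)
            (lvl_nonneg hu _ hi1)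
      _ ≤ (((T i).card : ℝ) + 1) * Real.exp (-L i) := by
          rw [Finset.sum_const, nsmul_eq_mul]
          have hcard := hπcard x i hi1
          rw [Set.ncard_eq_toFinset_card _ (hNfin i)] at hcard
          gcongr
          exact_mod_cast hcard
      _ = _ := exp_neg_lvl u _ hi1
  have hreal : μ.real (⋃ i ∈ Finset.Icc 1 M, ⋃ p ∈ (hNfin i).toFinset, B i p)
      < Real.exp (-u) := by
    have hpi := Real.pi_pos
    calc μ.real (⋃ i ∈ Finset.Icc 1 M, ⋃ p ∈ (hNfin i).toFinset, B i p)
        ≤ ∑ i ∈ Finset.Icc 1 M, μ.real (⋃ p ∈ (hNfin i).toFinset, B i p) :=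
          measureReal_biUnion_finset_le _ _
      _ ≤ ∑ i ∈ Finset.Icc 1 M, Real.exp (-u) * (6 / Real.pi ^ 2) * (1 / (i : ℝ) ^ 2) :=
          Finset.sum_le_sum hlevel
      _ = Real.exp (-u) * (6 / Real.pi ^ 2) * ∑ i ∈ Finset.Icc 1 M, (1 / (i : ℝ) ^ 2) := by
          rw [Finset.mul_sum]
      _ < Real.exp (-u) * (6 / Real.pi ^ 2) * (Real.pi ^ 2 / 6) := by
          gcongr
          exact sum_inv_sq_lt M
      _ = Real.exp (-u) := by field_simp
  refine lt_of_le_of_lt (measure_mono hsubset) ?_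
  rw [ENNReal.lt_ofReal_iff_toReal_lt (measure_ne_top _ _)]
  exact hreal


end
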